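/- arXiv:1501.07001 — 2 statements merged into one kernel-verified Lean document; each statement's English description precedes it below -/
import Mathlib

section
/- Let G be a group generated by a finite set S such that the word metric d_S on G is δ-hyperbolic. Then there exists a constant C > 0, depending only on δ and S, such that for every K ≥ 0, every K-quasiconvex subgroup Q ≤ G, and every subgroup G' ≤ G of finite index I, the intersection Q ∩ G' is C·I·(K+1)-quasiconvex in G with respect to S. -/
/-- The word length of `g` with respect to a generating set `S`: the least `n` such that
`g` is a product of `n` elements of `S ∪ S⁻¹`. -/
noncomputable def wordLength {G : Type*} [Group G] (S : Set G) (g : G) : ℕ :=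
  sInf {n : ℕ | ∃ w : List G, (∀ x ∈ w, x ∈ S ∨ x⁻¹ ∈ S) ∧ w.length = n ∧ w.prod = g}

/-- A subgroup `Q` is `K`-quasiconvex with respect to `S` if for every `q ∈ Q` and every
minimal-length expression of `q` as a word in `S ∪ S⁻¹`, every prefix product of that word
lies at word-metric distance at most `K` from `Q`. -/
def IsQuasiconvex {G : Type*} [Group G] (S : Set G) (Q : Subgroup G) (K : ℕ) : Prop :=
  ∀ w : List G, (∀ x ∈ w, x ∈ S ∨ x⁻¹ ∈ S) → w.prod ∈ Q →
    w.length = wordLength S w.prod →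
    ∀ j : ℕ, ∃ h ∈ Q, wordLength S ((w.take j).prod⁻¹ * h) ≤ K


lemma wl_exists {G : Type*} [Group G] (S : Set G) (hS : Subgroup.closure S = ⊤) (g : G) :
    ∃ w : List G, (∀ x ∈ w, x ∈ S ∨ x⁻¹ ∈ S) ∧ w.length = wordLength S g ∧ w.prod = g := by
  have hne : {n : ℕ | ∃ w : List G, (∀ x ∈ w, x ∈ S ∨ x⁻¹ ∈ S) ∧ w.length = n ∧ w.prod = g}.Nonempty := by
    have hg : g ∈ Subgroup.closure S := by rw [hS]; trivial
    rw [← Subgroup.mem_toSubmonoid, Subgroup.closure_toSubmonoid] at hg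
    obtain ⟨l, hl, hp⟩ := Submonoid.exists_list_of_mem_closure hg
    exact ⟨l.length, l, hl, rfl, hp⟩
  exact Nat.sInf_mem hne

lemma wl_le {G : Type*} [Group G] (S : Set G) (w : List G) (hw : ∀ x ∈ w, x ∈ S ∨ x⁻¹ ∈ S) :
    wordLength S w.prod ≤ w.length :=
  Nat.sInf_le ⟨w, hw, rfl, rfl⟩

lemma wl_mul {G : Type*} [Group G] (S : Set G) (hS : Subgroup.closure S = ⊤) (a b : G) :
    wordLength S (a * b) ≤ wordLength S a + wordLength S b := by
  obtain ⟨u, hu, hul, hup⟩ := wl_exists S hS a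
  obtain ⟨v, hv, hvl, hvp⟩ := wl_exists S hS b
  have := wl_le S (u ++ v) (by
    intro x hx
    rcases List.mem_append.1 hx with h | h
    exacts [hu x h, hv x h])
  rw [List.prod_append, hup, hvp, List.length_append, hul, hvl] at this
  exact this

lemma wl_inv {G : Type*} [Group G] (S : Set G) (hS : Subgroup.closure S = ⊤) (a : G) :
    wordLength S a⁻¹ ≤ wordLength S a := by
  obtain ⟨u, hu, hul, hup⟩ := wl_exists S hS a
  have := wl_le S (u.map (·⁻¹)).reverse (by
    intro x hx
    rw [List.mem_reverse, List.mem_map] at hx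
    obtain ⟨y, hy, rfl⟩ := hx
    rw [inv_inv]
    exact (hu y hy).symm)
  rw [← List.prod_inv_reverse, hup] at this
  simpa [hul] using this

lemma wl_step {G : Type*} [Group G] (S : Set G) (w : List G)
    (hw : ∀ x ∈ w, x ∈ S ∨ x⁻¹ ∈ S) (j : ℕ) :
    wordLength S ((w.take j).prod⁻¹ * (w.take (j + 1)).prod) ≤ 1 := by
  rw [List.take_add_one, List.prod_append, inv_mul_cancel_left]
  refine (wl_le S _ ?_).trans ?_
  · intro x hx
    apply hw
    rw [Option.mem_toList] at hx
    exact List.mem_of_getElem? hx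
  · cases w[j]? <;> simp

/-- Schreier graph of the action of short elements of `Q` on the cosets of `G'`. -/
def schreierG {G : Type*} [Group G] (S : Set G) (hS : Subgroup.closure S = ⊤)
    (Q G' : Subgroup G) (L : ℕ) : SimpleGraph (G ⧸ G') where
  Adj a b := a ≠ b ∧ ∃ t ∈ Q, wordLength S t ≤ L ∧ t • a = b
  symm := ⟨by
    rintro a b ⟨hab, t, ht, hl, rfl⟩
    exact ⟨hab.symm, t⁻¹, Q.inv_mem ht, (wl_inv S hS t).trans hl, inv_smul_smul t a⟩⟩
  loopless := ⟨fun a h => h.1 rfl⟩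

lemma schreier_walk {G : Type*} [Group G] (S : Set G) (hS : Subgroup.closure S = ⊤)
    (Q G' : Subgroup G) (L : ℕ) {a b : G ⧸ G'} (p : (schreierG S hS Q G' L).Walk a b) :
    ∃ t ∈ Q, wordLength S t ≤ p.length * L ∧ t • a = b := by
  induction p with
  | nil => exact ⟨1, Q.one_mem, by simpa using wl_le S [] (by simp), one_smul _ _⟩
  | cons h p ih =>
    obtain ⟨t, ht, hl, rfl⟩ := ih
    obtain ⟨-, s, hs, hsl, hse⟩ := id h
    refine ⟨t * s, Q.mul_mem ht hs, (wl_mul S hS t s).trans ?_, by rw [mul_smul, hse]⟩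
    rw [SimpleGraph.Walk.length_cons]
    nlinarith

lemma schreier_reach {G : Type*} [Group G] (S : Set G) (hS : Subgroup.closure S = ⊤)
    (Q G' : Subgroup G) (L : ℕ) (g h : G) (hg : g ∈ Q) (hh : h ∈ Q)
    (hl : wordLength S (g⁻¹ * h) ≤ L) :
    (schreierG S hS Q G' L).Reachable ((g⁻¹ : G) : G ⧸ G') ((h⁻¹ : G) : G ⧸ G') := by
  by_cases e : ((g⁻¹ : G) : G ⧸ G') = ((h⁻¹ : G) : G ⧸ G')
  · rw [e]
  · refine SimpleGraph.Adj.reachable ⟨e, (g⁻¹ * h)⁻¹, ?_, (wl_inv S hS _).trans hl, ?_⟩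
    · exact Q.inv_mem (Q.mul_mem (Q.inv_mem hg) hh)
    · rw [MulAction.Quotient.smul_coe, smul_eq_mul]
      congr 1
      group

/-- If the word metric on `G` with respect to the finite generating set `S` is
`δ`-hyperbolic (four-point condition), then there is `C > 0`, depending only on `δ` and
`S`, such that for every `K ≥ 0`, every `K`-quasiconvex subgroup `Q ≤ G` and every
subgroup `G' ≤ G` of finite index `I`, the intersection `Q ∩ G'` is
`C·I·(K+1)`-quasiconvex in `G`. -/
theorem quasiconvexity_of_intersection_with_finite_index
    {G : Type*} [Group G] (S : Set G) (hSfin : S.Finite)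
    (hSgen : Subgroup.closure S = ⊤)
    (δ : ℝ) (hδ : 0 ≤ δ)
    (hhyp : ∀ x y z w : G,
      (wordLength S (x⁻¹ * y) : ℝ) + (wordLength S (z⁻¹ * w) : ℝ) ≤
        max ((wordLength S (x⁻¹ * z) : ℝ) + (wordLength S (y⁻¹ * w) : ℝ))
            ((wordLength S (x⁻¹ * w) : ℝ) + (wordLength S (y⁻¹ * z) : ℝ)) + 2 * δ) :
    ∃ C : ℕ, 0 < C ∧
      ∀ (K : ℕ) (Q : Subgroup G), IsQuasiconvex S Q K →
        ∀ (G' : Subgroup G) (I : ℕ), G'.index = I → I ≠ 0 →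
          IsQuasiconvex S (Q ⊓ G') (C * I * (K + 1)) := by
  refine ⟨2, by norm_num, ?_⟩
  intro K Q hQ G' I hI hI0 w hw hmem hlen
  have hmem' := Subgroup.mem_inf.1 hmem
  choose h hhQ hhl using hQ w hw hmem'.1 hlen
  have reach : ∀ d j, w.length ≤ j + d →
      (schreierG S hSgen Q G' (2 * K + 1)).Reachable ((h j)⁻¹ : G) ((w.prod⁻¹ : G) : G ⧸ G') := by
    intro d
    induction d with
    | zero =>
      intro j hj
      apply schreier_reach S hSgen Q G' _ _ _ (hhQ j) hmem'.1
      have h1 := hhl j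
      rw [List.take_of_length_le (by simpa using hj)] at h1
      have h2 := wl_inv S hSgen (w.prod⁻¹ * h j)
      rw [mul_inv_rev, inv_inv] at h2
      omega
    | succ d ih =>
      intro j hj
      refine SimpleGraph.Reachable.trans ?_ (ih (j + 1) (by omega))
      apply schreier_reach S hSgen Q G' _ _ _ (hhQ j) (hhQ (j + 1))
      have h1 := hhl j
      have h2 := wl_inv S hSgen ((w.take j).prod⁻¹ * h j)
      have h3 := hhl (j + 1)
      have h4 := wl_step S w hw j
      have e : (h j)⁻¹ * h (j + 1) = ((w.take j).prod⁻¹ * h j)⁻¹ *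
          (((w.take j).prod⁻¹ * (w.take (j + 1)).prod) *
            ((w.take (j + 1)).prod⁻¹ * h (j + 1))) := by group
      rw [e]
      have h5 := wl_mul S hSgen ((w.take j).prod⁻¹ * h j)⁻¹
          (((w.take j).prod⁻¹ * (w.take (j + 1)).prod) *
            ((w.take (j + 1)).prod⁻¹ * h (j + 1)))
      have h6 := wl_mul S hSgen ((w.take j).prod⁻¹ * (w.take (j + 1)).prod)
            ((w.take (j + 1)).prod⁻¹ * h (j + 1))
      omega
  intro j
  have hfi : G'.FiniteIndex := ⟨by rw [hI]; exact hI0⟩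
  have : Fintype (G ⧸ G') := Fintype.ofFinite _
  obtain ⟨p, hp⟩ := (reach w.length j (by omega)).exists_isPath
  have hpl := hp.length_lt
  have hcard : Fintype.card (G ⧸ G') = I := by
    rw [← hI, Subgroup.index, Nat.card_eq_fintype_card]
  rw [hcard] at hpl
  obtain ⟨t, ht, htl, hte⟩ := schreier_walk S hSgen Q G' _ p
  refine ⟨h j * t⁻¹, Subgroup.mem_inf.2 ⟨Q.mul_mem (hhQ j) (Q.inv_mem ht), ?_⟩, ?_⟩
  · rw [MulAction.Quotient.smul_coe, smul_eq_mul, QuotientGroup.eq] at hte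
    have := G'.mul_mem hte hmem'.2
    simpa using this
  · rw [← mul_assoc]
    have h1 := wl_mul S hSgen ((w.take j).prod⁻¹ * h j) t⁻¹
    have h2 := wl_inv S hSgen t
    have h3 := hhl j
    have h4 : p.length * (2 * K + 1) + (2 * K + 1) ≤ I * (2 * K + 1) := by nlinarith
    nlinarith
end

section
/- Let F be the free group of rank r ≥ 1 with free basis S, and for g ∈ F let |g| denote the length of the reduced word representing g. Let K ≥ 0 and let Q ≤ F be a K-quasiconvex subgroup with respect to S. Then for every n ∈ ℕ and every g ∈ F − Q with |g| ≤ n, there exists a subgroup H ≤ F with Q ≤ H, g ∉ H, and [F : H] ≤ (2r)^K + n. That is, the separability growth of F with respect to the class 𝒬_K of K-quasiconvex subgroups satisfies Sep^{𝒬_K}_{F,S}(Q, n) ≤ (2r)^K + n. -/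
/-- `D_F^{Ω_Q}(g)`: the minimal index of a subgroup containing `Q` but not `g`
(`∞` if no such finite-index subgroup exists). -/
noncomputable def sepDiv {G : Type*} [Group G] (Q : Subgroup G) (g : G) : ℕ∞ :=
  sInf ((fun Δ : Subgroup G => (Δ.index : ℕ∞)) ''
    {Δ : Subgroup G | Q ≤ Δ ∧ g ∉ Δ ∧ Δ.index ≠ 0})

/-- The separability growth function `Sep_{G,S}^{𝒬}(Q,n)`. -/
noncomputable def sepGrowth {G : Type*} [Group G] (S : Set G) (Q : Subgroup G) (n : ℕ) : ℕ∞ :=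
  sSup (sepDiv Q '' {g : G | g ∉ Q ∧ wordLength S g ≤ n})

theorem fgs_ball {r : ℕ} (K : ℕ) : ∃ N : Finset (List (Fin r × Bool)),
    N.card ≤ (2 * r) ^ (K + 1) ∧
    ∀ L : List (Fin r × Bool), FreeGroup.IsReduced L → L ≠ [] → L.length ≤ K + 1 → L ∈ N := by
  classical
  induction K with
  | zero =>
    refine ⟨Finset.univ.image (fun x => [x]), ?_, ?_⟩
    · refine Finset.card_image_le.trans ?_
      simp [mul_comm]
    · intro L _ hne hl
      match L, hne, hl with
      | [x], _, _ => simp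
  | succ K ih =>
    obtain ⟨N, hN, hmem⟩ := ih
    refine ⟨((Finset.univ : Finset (Fin r × Bool)) ×ˢ N).image
      (fun p => if p.2.head? = some (p.1.1, !p.1.2) then p.2 else p.1 :: p.2), ?_, ?_⟩
    · refine Finset.card_image_le.trans ?_
      rw [Finset.card_product]
      have : (Finset.univ : Finset (Fin r × Bool)).card = 2 * r := by simp [mul_comm]
      rw [this, pow_succ _ (K + 1), mul_comm]
      exact Nat.mul_le_mul_right _ hN
    · intro L hr hne hl
      rw [Finset.mem_image]
      match L, hr, hne, hl with
      | [x], hr, _, _ =>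
        exact ⟨((x.1, !x.2), [x]), by simp [hmem [x] hr], by simp⟩
      | x :: y :: M, hr, _, hl =>
        by_cases h : (x :: y :: M).length ≤ K + 1
        · exact ⟨((x.1, !x.2), x :: y :: M), by simp [hmem _ hr (by simp) h], by simp⟩
        · have hr2 := FreeGroup.isReduced_cons_cons.1 hr
          refine ⟨(x, y :: M), by simp [hmem _ hr2.2 (by simp) (by simpa using hl)], ?_⟩
          rw [if_neg]
          intro he
          simp only [List.head?_cons, Option.some.injEq] at he
          have h1 := hr2.1
          rw [he] at h1
          simp at h1

theorem fgs_ball2 {r : ℕ} (K : ℕ) : ∃ N : Finset (List (Fin r × Bool)),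
    N.card ≤ (2 * r) ^ K + min K 1 ∧
    ∀ L : List (Fin r × Bool), FreeGroup.IsReduced L → L.length ≤ K → L ∈ N := by
  classical
  cases K with
  | zero => exact ⟨{[]}, by simp, fun L _ h => by simpa using h⟩
  | succ K =>
    obtain ⟨N, hN, hmem⟩ := fgs_ball (r := r) K
    refine ⟨insert [] N, (Finset.card_insert_le _ _).trans (by simpa using hN), ?_⟩
    intro L hr hl
    by_cases h : L = []
    · simp [h]
    · exact Finset.mem_insert_of_mem (hmem L hr h hl)

def fgsLetter {r : ℕ} (x : Fin r × Bool) : FreeGroup (Fin r) := FreeGroup.mk [x]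

theorem fgs_prod {r : ℕ} (L : List (Fin r × Bool)) : (L.map fgsLetter).prod = FreeGroup.mk L := by
  induction L with
  | nil => rfl
  | cons x L ih => rw [List.map_cons, List.prod_cons, ih, fgsLetter, FreeGroup.mul_mk]; rfl

theorem fgs_letter_mem {r : ℕ} (x : Fin r × Bool) :
    fgsLetter x ∈ Set.range (FreeGroup.of : Fin r → FreeGroup (Fin r)) ∨
    (fgsLetter x)⁻¹ ∈ Set.range (FreeGroup.of : Fin r → FreeGroup (Fin r)) := by
  obtain ⟨i, b⟩ := x
  cases b
  · right; exact ⟨i, by simp [fgsLetter, FreeGroup.of, FreeGroup.invRev]⟩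
  · left; exact ⟨i, rfl⟩

theorem fgs_wordLength {r : ℕ} (g : FreeGroup (Fin r)) :
    wordLength (Set.range (FreeGroup.of : Fin r → FreeGroup (Fin r))) g = g.toWord.length := by
  apply le_antisymm
  · apply Nat.sInf_le
    refine ⟨g.toWord.map fgsLetter, ?_, by simp, by rw [fgs_prod, FreeGroup.mk_toWord]⟩
    intro x hx
    obtain ⟨y, _, rfl⟩ := List.mem_map.1 hx
    exact fgs_letter_mem y
  · apply le_csInf
    · refine ⟨_, g.toWord.map fgsLetter, ?_, rfl, by rw [fgs_prod, FreeGroup.mk_toWord]⟩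
      intro x hx
      obtain ⟨y, _, rfl⟩ := List.mem_map.1 hx
      exact fgs_letter_mem y
    · rintro n ⟨w, hw, rfl, rfl⟩
      change FreeGroup.norm w.prod ≤ _
      induction w with
      | nil => simp
      | cons x w ih =>
        rw [List.prod_cons, List.length_cons]
        have h1 := ih (fun y hy => hw y (List.mem_cons_of_mem _ hy))
        have h2 : FreeGroup.norm x = 1 := by
          rcases hw x (by simp) with ⟨i, hi⟩ | ⟨i, hi⟩
          · rw [← hi, FreeGroup.norm_of]
          · rw [← FreeGroup.norm_inv_eq, ← hi, FreeGroup.norm_of]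
        have := FreeGroup.norm_mul_le x w.prod
        omega

theorem fgs_action {r : ℕ} {X : Type*} [MulAction (FreeGroup (Fin r)) X] (T : Finset X) :
    ∃ φ : FreeGroup (Fin r) →* Equiv.Perm T,
      ∀ (L : List (Fin r × Bool)) (x : T),
        (∀ j, FreeGroup.mk (L.drop j) • (x : X) ∈ T) →
        (φ (FreeGroup.mk L) x : X) = FreeGroup.mk L • (x : X) := by
  classical
  have key : ∀ i : Fin r, ∃ e : Equiv.Perm T, ∀ x : T, FreeGroup.of i • (x : X) ∈ T →
      (e x : X) = FreeGroup.of i • (x : X) := by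
    intro i
    obtain ⟨e, he⟩ := Set.MapsTo.exists_equiv_extend_of_card_eq (α := T) (t := T)
      (by simp) (s := {x : T | FreeGroup.of i • (x : X) ∈ T})
      (f := fun x => FreeGroup.of i • (x : X)) (fun x hx => hx)
      (fun x _ y _ h => Subtype.ext (MulAction.injective _ h))
    exact ⟨e, he⟩
  choose e he using key
  refine ⟨FreeGroup.lift e, ?_⟩
  have letter : ∀ (a : Fin r × Bool) (x : T), fgsLetter a • (x : X) ∈ T →
      (FreeGroup.lift e (fgsLetter a) x : X) = fgsLetter a • (x : X) := by
    rintro ⟨i, b⟩ x hx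
    cases b
    · have h1 : fgsLetter (i, false) = (FreeGroup.of i)⁻¹ := by
        simp [fgsLetter, FreeGroup.of, FreeGroup.invRev]
      rw [h1] at hx ⊢
      have h2 := he i ⟨_, hx⟩ (by simp)
      simp only [smul_inv_smul] at h2
      rw [map_inv, FreeGroup.lift_apply_of]
      have h3 : e i ⟨_, hx⟩ = x := Subtype.ext h2
      have h4 : (e i)⁻¹ x = ⟨_, hx⟩ := by rw [Equiv.Perm.inv_eq_iff_eq, h3]
      rw [h4]
    · have h1 : fgsLetter (i, true) = FreeGroup.of i := rfl
      rw [h1] at hx ⊢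
      rw [FreeGroup.lift_apply_of]
      exact he i x hx
  intro L x
  induction L with
  | nil =>
    intro _
    change (FreeGroup.lift e 1 x : X) = (1 : FreeGroup (Fin r)) • (x : X)
    simp
  | cons a L ih =>
    intro h
    have h1 : FreeGroup.mk (a :: L) = fgsLetter a * FreeGroup.mk L := by
      rw [fgsLetter, FreeGroup.mul_mk]; rfl
    have h2 := ih (fun j => by simpa using h (j + 1))
    have h3 := h 0
    rw [List.drop_zero, h1, mul_smul, ← h2] at h3
    rw [h1, map_mul, Equiv.Perm.mul_apply, letter _ _ h3, h2, mul_smul]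

theorem fgs_main
    (r : ℕ) (K : ℕ) (Q : Subgroup (FreeGroup (Fin r)))
    (hQ : IsQuasiconvex (Set.range (FreeGroup.of : Fin r → FreeGroup (Fin r))) Q K)
    (n : ℕ) (g : FreeGroup (Fin r)) (hg : g ∉ Q)
    (hn : wordLength (Set.range (FreeGroup.of : Fin r → FreeGroup (Fin r))) g ≤ n) :
      ∃ H : Subgroup (FreeGroup (Fin r)), Q ≤ H ∧ g ∉ H ∧
        0 < H.index ∧ H.index ≤ (2 * r) ^ K + n := by
  classical
  rw [fgs_wordLength] at hn
  obtain ⟨N, hN, hmem⟩ := fgs_ball2 (r := r) K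
  let v : List (Fin r × Bool) → FreeGroup (Fin r) ⧸ Q := fun L => (FreeGroup.mk L : FreeGroup (Fin r))
  let T : Finset (FreeGroup (Fin r) ⧸ Q) :=
    (N ∪ (Finset.range (g.toWord.length - min K 1)).image (fun j => g.toWord.drop j)).image v
  have hg1 : 0 < g.toWord.length := by
    rw [List.length_pos_iff, Ne, FreeGroup.toWord_eq_nil_iff]
    rintro rfl
    exact hg Q.one_mem
  have hT : T.card ≤ (2 * r) ^ K + n := by
    refine Finset.card_image_le.trans ((Finset.card_union_le _ _).trans ?_)
    have := (Finset.card_image_le (s := Finset.range (g.toWord.length - min K 1))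
      (f := fun j => g.toWord.drop j))
    rw [Finset.card_range] at this
    omega
  have hTball : ∀ u : FreeGroup (Fin r), u.toWord.length ≤ K → (u : FreeGroup (Fin r) ⧸ Q) ∈ T := by
    intro u hu
    refine Finset.mem_image.2 ⟨u.toWord, Finset.mem_union_left _
      (hmem _ FreeGroup.isReduced_toWord hu), ?_⟩
    simp only [v, FreeGroup.mk_toWord]
  have hTg : ∀ j, v (g.toWord.drop j) ∈ T := by
    intro j
    refine Finset.mem_image_of_mem _ ?_
    by_cases hj : j < g.toWord.length - min K 1
    · exact Finset.mem_union_right _ (Finset.mem_image_of_mem _ (Finset.mem_range.2 hj))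
    · refine Finset.mem_union_left _ (hmem _ ?_ ?_)
      · exact FreeGroup.isReduced_toWord.infix (List.drop_suffix _ _).isInfix
      · rw [List.length_drop]; omega
  have hTq : ∀ q ∈ Q, ∀ j, v (q.toWord.drop j) ∈ T := by
    intro q hq j
    have hp : (q.toWord.map fgsLetter).prod = q := by rw [fgs_prod, FreeGroup.mk_toWord]
    obtain ⟨h, hh, hl⟩ := hQ (q.toWord.map fgsLetter) (by
      intro x hx
      obtain ⟨y, _, rfl⟩ := List.mem_map.1 hx
      exact fgs_letter_mem y) (by rw [hp]; exact hq)
      (by rw [hp, fgs_wordLength, List.length_map]) j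
    rw [fgs_wordLength, ← List.map_take, fgs_prod] at hl
    have := hTball _ hl
    convert this using 1
    simp only [v]
    rw [QuotientGroup.eq]
    have h1 : FreeGroup.mk (q.toWord.take j) * FreeGroup.mk (q.toWord.drop j) = q := by
      rw [FreeGroup.mul_mk, List.take_append_drop, FreeGroup.mk_toWord]
    have h2 : (FreeGroup.mk (q.toWord.drop j))⁻¹ * ((FreeGroup.mk (q.toWord.take j))⁻¹ * h)
        = q⁻¹ * h := by
      rw [← mul_assoc, ← mul_inv_rev, h1]
    rw [h2]
    exact Q.mul_mem (Q.inv_mem hq) hh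
  have hbase : ((1 : FreeGroup (Fin r)) : FreeGroup (Fin r) ⧸ Q) ∈ T := hTball 1 (by simp)
  obtain ⟨φ, hφ⟩ := fgs_action (r := r) T
  have hsm : ∀ L, FreeGroup.mk L • ((1 : FreeGroup (Fin r)) : FreeGroup (Fin r) ⧸ Q) = v L := by
    intro L
    rw [MulAction.Quotient.smul_coe, smul_eq_mul, mul_one]
  have hval : ∀ f : FreeGroup (Fin r), (∀ j, v (f.toWord.drop j) ∈ T) →
      ((φ f ⟨_, hbase⟩ : T) : FreeGroup (Fin r) ⧸ Q) = f := by
    intro f hf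
    have := hφ f.toWord ⟨_, hbase⟩ (fun j => by rw [hsm]; exact hf j)
    rw [hsm] at this
    simpa only [v, FreeGroup.mk_toWord] using this
  letI : MulAction (FreeGroup (Fin r)) T := MulAction.compHom T φ
  have hact : ∀ (f : FreeGroup (Fin r)) (x : T), f • x = φ f x := fun _ _ => rfl
  have hidx := MulAction.index_stabilizer (FreeGroup (Fin r)) (⟨_, hbase⟩ : T)
  refine ⟨MulAction.stabilizer (FreeGroup (Fin r)) (⟨_, hbase⟩ : T), ?_, ?_, ?_, ?_⟩
  · intro q hq
    rw [MulAction.mem_stabilizer_iff, hact]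
    apply Subtype.ext
    rw [hval q (hTq q hq)]
    rw [QuotientGroup.eq]
    simpa using hq
  · intro h
    rw [MulAction.mem_stabilizer_iff, hact] at h
    have h1 := hval g hTg
    rw [h, QuotientGroup.eq] at h1
    exact hg (by simpa using h1)
  · rw [hidx, Set.ncard_pos]
    exact MulAction.nonempty_orbit _
  · rw [hidx]
    refine le_trans ?_ hT
    refine (Set.ncard_le_card _).trans ?_
    simp

/-- Quantified separability of `K`-quasiconvex subgroups of the free group `F` of rank
`r ≥ 1` with free basis `S = {of i}`: every `g ∈ F − Q` with `|g| ≤ n` is separated from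
`Q` by a subgroup of index at most `(2r)^K + n`; that is,
`Sep^{𝒬_K}_{F,S}(Q,n) ≤ (2r)^K + n`. -/
theorem free_group_separability_growth
    (r : ℕ) (hr : 1 ≤ r) (K : ℕ) (Q : Subgroup (FreeGroup (Fin r)))
    (hQ : IsQuasiconvex (Set.range (FreeGroup.of : Fin r → FreeGroup (Fin r))) Q K) :
    (∀ (n : ℕ) (g : FreeGroup (Fin r)), g ∉ Q →
      wordLength (Set.range (FreeGroup.of : Fin r → FreeGroup (Fin r))) g ≤ n →
      ∃ H : Subgroup (FreeGroup (Fin r)), Q ≤ H ∧ g ∉ H ∧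
        0 < H.index ∧ H.index ≤ (2 * r) ^ K + n) ∧
    (∀ n : ℕ,
      sepGrowth (Set.range (FreeGroup.of : Fin r → FreeGroup (Fin r))) Q n ≤
        (((2 * r) ^ K + n : ℕ) : ℕ∞)) := by
  refine ⟨fun n g hg hn => fgs_main r K Q hQ n g hg hn, fun n => ?_⟩
  apply sSup_le
  rintro _ ⟨g, ⟨hg, hn⟩, rfl⟩
  obtain ⟨H, h1, h2, h3, h4⟩ := fgs_main r K Q hQ n g hg hn
  have h5 : sepDiv Q g ≤ (H.index : ℕ∞) := sInf_le ⟨H, ⟨h1, h2, h3.ne'⟩, rfl⟩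
  exact h5.trans (Nat.cast_le.2 h4)
end
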